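/- Let X be a Banach space over ℝ such that for every Banach space Z over ℝ the pair (X,Z) has the Bishop–Phelps–Bollobás property (that is, X is a universal BPB domain space). Then there exists a single function η_X : (0,1) → (0,∞) such that for every Banach space Y over ℝ, the pair (X,Y) has the Bishop–Phelps–Bollobás property with the function η_X. -/

import Mathlib

open scoped ENNReal

/-- A pair `(X, Y)` of normed spaces has the Bishop–Phelps–Bollobás property with the
function `η : (0,1) → (0,∞)` (encoded as `η : ℝ → ℝ`, relevant only on `(0,1)`). -/
def BPBpWith (X Y : Type*) [NormedAddCommGroup X] [NormedSpace ℝ X]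
    [NormedAddCommGroup Y] [NormedSpace ℝ Y] (η : ℝ → ℝ) : Prop :=
  ∀ ε ∈ Set.Ioo (0 : ℝ) 1, ∀ (T₀ : X →L[ℝ] Y) (x₀ : X),
    ‖T₀‖ = 1 → ‖x₀‖ = 1 → 1 - η ε < ‖T₀ x₀‖ →
      ∃ (S : X →L[ℝ] Y) (x : X),
        ‖x‖ = 1 ∧ ‖S‖ = 1 ∧ ‖S x‖ = 1 ∧ ‖x - x₀‖ < ε ∧ ‖S - T₀‖ < ε

/-- The pair `(X, Y)` has the Bishop–Phelps–Bollobás property. -/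
def HasBPBp (X Y : Type*) [NormedAddCommGroup X] [NormedSpace ℝ X]
    [NormedAddCommGroup Y] [NormedSpace ℝ Y] : Prop :=
  ∃ η : ℝ → ℝ, (∀ ε ∈ Set.Ioo (0 : ℝ) 1, 0 < η ε) ∧ BPBpWith X Y η

/-!
If no `δ > 0` worked for every range at some `ε`, there would be counterexamples
`Tₙ : X → Yₙ` with rates `δₙ → 0`. Let `Z` be the `ℓ∞`-sum of the `Yₙ` and view `Tₙ` as an operator
into the `n`-th summand of `Z`. An operator `S : X → Z` within `ε ≤ 1` of it is strictly less than
`1` in every other coordinate, so if `S` attains its norm at `x`, it does so in the `n`-th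
coordinate, and projecting `S` to `Yₙ` shows that `Tₙ` was not a counterexample once `δₙ` is below
the rate of `(X, Z)` at `ε`.
-/

/-- The Bishop–Phelps–Bollobás property of `(X, Y)` at a fixed accuracy `ε` with rate `δ`, so that
`BPBpWith X Y η` unfolds to `BPBpAt X Y ε (η ε)` for all `ε ∈ (0, 1)`. It separates the search for a
rate valid for all ranges `Y`, done one `ε` at a time, from the choice of the function `η`. -/
def BPBpAt (X Y : Type*) [NormedAddCommGroup X] [NormedSpace ℝ X]
    [NormedAddCommGroup Y] [NormedSpace ℝ Y] (ε δ : ℝ) : Prop :=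
  ∀ (T₀ : X →L[ℝ] Y) (x₀ : X),
    ‖T₀‖ = 1 → ‖x₀‖ = 1 → 1 - δ < ‖T₀ x₀‖ →
      ∃ (S : X →L[ℝ] Y) (x : X),
        ‖x‖ = 1 ∧ ‖S‖ = 1 ∧ ‖S x‖ = 1 ∧ ‖x - x₀‖ < ε ∧ ‖S - T₀‖ < ε

theorem lp_top_norm_eq_max_norm_apply_norm_sub_single {ι : Type*} [DecidableEq ι] {E : ι → Type*}
    [∀ i, NormedAddCommGroup (E i)] (z : lp E ∞) (i : ι) :
    ‖z‖ = max ‖z i‖ ‖z - lp.single ∞ i (z i)‖ := by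
  have norm_coord_le (w : lp E ∞) (j : ι) : ‖w j‖ ≤ ‖w‖ :=
    lp.norm_apply_le_norm ENNReal.top_ne_zero w j
  have compl_apply_of_ne {j : ι} (hj : j ≠ i) : (z - lp.single ∞ i (z i)) j = z j := by
    simp [hj]
  apply le_antisymm
  · refine lp.norm_le_of_forall_le (le_max_of_le_left (norm_nonneg _)) fun j => ?_
    obtain rfl | hj := eq_or_ne j i
    · exact le_max_left _ _
    · rw [← compl_apply_of_ne hj]
      exact le_max_of_le_right (norm_coord_le _ j)
  · refine max_le (norm_coord_le z i) (lp.norm_le_of_forall_le (norm_nonneg _) fun j => ?_)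
    obtain rfl | hj := eq_or_ne j i
    · simp
    · rw [compl_apply_of_ne hj]
      exact norm_coord_le z j

namespace BPBpAt

variable {X : Type*} [NormedAddCommGroup X] [NormedSpace ℝ X] {ε δ δ' : ℝ}

theorem of_le {Y : Type*} [NormedAddCommGroup Y] [NormedSpace ℝ Y]
    (h : BPBpAt X Y ε δ) (hδ : δ' ≤ δ) : BPBpAt X Y ε δ' :=
  fun T₀ x₀ hT₀ hx₀ hT₀x₀ => h T₀ x₀ hT₀ hx₀ (by linarith)

/-- The hypotheses on `J` and `P` say that `Z` is the `ℓ∞`-sum of `J(Y)` and `ker P`. -/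
theorem of_mSummand {Y Z : Type*} [NormedAddCommGroup Y] [NormedSpace ℝ Y]
    [NormedAddCommGroup Z] [NormedSpace ℝ Z] (J : Y →ₗᵢ[ℝ] Z) (P : Z →L[ℝ] Y)
    (hPJ : ∀ y, P (J y) = y) (hP : ∀ z, ‖z‖ = max ‖P z‖ ‖z - J (P z)‖)
    (hε : ε ≤ 1) (h : BPBpAt X Z ε δ) : BPBpAt X Y ε δ := by
  intro T₀ x₀ hT₀ hx₀ hT₀x₀
  let JT₀ : X →L[ℝ] Z := J.toContinuousLinearMap ∘L T₀
  obtain ⟨S, x, hx, hS, hSx, hxx₀, hSJT₀⟩ := h JT₀ x₀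
    (by rw [J.norm_toContinuousLinearMap_comp, hT₀]) hx₀ (by simpa [JT₀] using hT₀x₀)
  have norm_comp_le (R : X →L[ℝ] Z) : ‖P ∘L R‖ ≤ ‖R‖ :=
    ContinuousLinearMap.opNorm_le_bound _ (norm_nonneg _) fun y =>
      ((le_max_left _ _).trans (hP (R y)).ge).trans (R.le_opNorm y)
  have hcompl : ‖S x - J (P (S x))‖ < 1 :=
    calc ‖S x - J (P (S x))‖
        = ‖(S - JT₀) x - J (P ((S - JT₀) x))‖ := by simp [JT₀, hPJ]
      _ ≤ ‖(S - JT₀) x‖ := (le_max_right _ _).trans (hP _).ge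
      _ ≤ ‖S - JT₀‖ := (S - JT₀).unit_le_opNorm x hx.le
      _ < 1 := hSJT₀.trans_le hε
  have hPSx : ‖P (S x)‖ = 1 := by
    have hmax : max ‖P (S x)‖ ‖S x - J (P (S x))‖ = 1 := (hP (S x)).symm.trans hSx
    exact (max_eq_iff.mp hmax).elim And.left fun hright => absurd hright.1 hcompl.ne
  refine ⟨P ∘L S, x, hx, le_antisymm ((norm_comp_le S).trans hS.le) ?_, hPSx, hxx₀, ?_⟩
  · exact hPSx.ge.trans ((P ∘L S).unit_le_opNorm x hx.le)
  · have hcomp : P ∘L S - T₀ = P ∘L (S - JT₀) := by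
      ext y
      simp [JT₀, hPJ]
    rw [hcomp]
    exact (norm_comp_le _).trans_lt hSJT₀

theorem of_lp_top {ι : Type*} {E : ι → Type*} [∀ i, NormedAddCommGroup (E i)]
    [∀ i, NormedSpace ℝ (E i)] (hε : ε ≤ 1) (h : BPBpAt X (lp E ∞) ε δ) (i : ι) :
    BPBpAt X (E i) ε δ := by
  classical
  exact h.of_mSummand ⟨lp.lsingle ∞ i, lp.norm_single ENNReal.zero_lt_top i⟩ (lp.evalCLM ℝ E ∞ i)
    (lp.single_apply_self ∞ i) (lp_top_norm_eq_max_norm_apply_norm_sub_single · i) hε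

theorem exists_uniform_rate.{v} (hε : ε ≤ 1)
    (h : ∀ (Z : Type v) [NormedAddCommGroup Z] [NormedSpace ℝ Z] [CompleteSpace Z],
      ∃ δ > 0, BPBpAt X Z ε δ) :
    ∃ δ > 0, ∀ (Y : Type v) [NormedAddCommGroup Y] [NormedSpace ℝ Y] [CompleteSpace Y],
      BPBpAt X Y ε δ := by
  by_contra! hbad
  choose Y _ _ _ hY using fun n : ℕ => hbad (1 / (n + 1)) Nat.one_div_pos_of_nat
  obtain ⟨δ, hδ, hZ⟩ := h (lp Y ∞)
  obtain ⟨n, hn⟩ := exists_nat_one_div_lt hδ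
  exact hY n ((hZ.of_lp_top hε n).of_le hn.le)

end BPBpAt

theorem universal_BPB_domain_has_universal_eta_general.{u, v} (X : Type u)
    [NormedAddCommGroup X] [NormedSpace ℝ X]
    (h : ∀ (Z : Type v) [NormedAddCommGroup Z] [NormedSpace ℝ Z] [CompleteSpace Z],
      HasBPBp X Z) :
    ∃ ηX : ℝ → ℝ, (∀ ε ∈ Set.Ioo (0 : ℝ) 1, 0 < ηX ε) ∧
      ∀ (Y : Type v) [NormedAddCommGroup Y] [NormedSpace ℝ Y] [CompleteSpace Y],
        BPBpWith X Y ηX := by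
  have hrate : ∀ ε ∈ Set.Ioo (0 : ℝ) 1, ∃ δ > 0,
      ∀ (Y : Type v) [NormedAddCommGroup Y] [NormedSpace ℝ Y] [CompleteSpace Y],
        BPBpAt X Y ε δ := fun ε hε =>
    BPBpAt.exists_uniform_rate hε.2.le fun Z _ _ _ =>
      let ⟨η, hη, hZ⟩ := h Z
      ⟨η ε, hη ε hε, hZ ε hε⟩
  choose! ηX hηX hX using hrate
  exact ⟨ηX, hηX, fun Y _ _ _ ε hε => hX ε hε Y⟩

/-- If `X` is a universal BPB domain space, then there is a single function `η_X` witnessing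
the Bishop–Phelps–Bollobás property of `(X, Y)` for every Banach space `Y`. -/
theorem universal_BPB_domain_has_universal_eta.{u} (X : Type u)
    [NormedAddCommGroup X] [NormedSpace ℝ X] [CompleteSpace X]
    (h : ∀ (Z : Type u) [NormedAddCommGroup Z] [NormedSpace ℝ Z] [CompleteSpace Z],
      HasBPBp X Z) :
    ∃ ηX : ℝ → ℝ, (∀ ε ∈ Set.Ioo (0 : ℝ) 1, 0 < ηX ε) ∧
      ∀ (Y : Type u) [NormedAddCommGroup Y] [NormedSpace ℝ Y] [CompleteSpace Y],
        BPBpWith X Y ηX :=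
  universal_BPB_domain_has_universal_eta_general X h
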